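/- Let n ≥ 1, let g be an invertible 2n×2n real matrix, let X be a 2n×2n real antisymmetric matrix, and let s ∈ ℂⁿ satisfy Re(s_j − s_{j+1}) ≥ 2 for all j = 1,…,n−1 (with s_{n+1} := −n−1). Then ∫_{O(2n)} f_n(s, g k X kᵀ gᵀ) d*k = Ψ_n(s, g gᵀ) · f_n(s, X). -/

import Mathlib

open MeasureTheory Matrix
open scoped BigOperators

noncomputable section

instance matrixMeasurableSpace {l : Type*} [Fintype l] : MeasurableSpace (Matrix l l ℝ) :=
  inferInstanceAs (MeasurableSpace (l → l → ℝ))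

/-- The orthogonal group `O(m)` as a subtype of `m × m` real matrices. -/
abbrev OG (m : ℕ) := Matrix.orthogonalGroup (Fin m) ℝ

/-- `t ^ w` for a real `t ≥ 0` and complex `w`, with the convention `0 ^ w = 0`. -/
def cpw (t : ℝ) (w : ℂ) : ℂ := if t = 0 then 0 else Complex.exp (w * Real.log t)

/-- The `2n × 2n` real antisymmetric matrix `D(a) = diag(a₁ J, …, aₙ J)`,
`J = [[0,1],[-1,0]]`. -/
def Dmat {n : ℕ} (a : Fin n → ℝ) : Matrix (Fin (2 * n)) (Fin (2 * n)) ℝ :=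
  Matrix.of fun i j =>
    if i.val / 2 = j.val / 2 then
      a ⟨i.val / 2, by have := i.isLt; omega⟩ *
        (if i.val % 2 = 0 ∧ j.val % 2 = 1 then 1
          else if i.val % 2 = 1 ∧ j.val % 2 = 0 then -1 else 0)
    else 0

/-- Vandermonde product `Δ_m(x) = ∏_{j<k} (x_k - x_j)`. -/
def vdm {m : ℕ} {R : Type*} [CommRing R] (x : Fin m → R) : R :=
  ∏ p ∈ Finset.univ.filter (fun p : Fin m × Fin m => p.1 < p.2), (x p.2 - x p.1)

/-- `s_{n+1} := -n-1` convention: the `j`-th exponent `(s_j - s_{j+1})/2 - 1`. -/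
def expo (n : ℕ) (s : Fin n → ℂ) (j : Fin n) : ℂ :=
  (s j - (if h : j.val + 1 < n then s ⟨j.val + 1, h⟩ else -(n : ℂ) - 1)) / 2 - 1

/-- The spherical-type group integral
`f_n(s,X) = ∫_{O(2n)} ∏_j det((kXkᵀ)_{[2j]})^{(s_j-s_{j+1})/2-1} d*k`. -/
def sphInt (n : ℕ) (μ : Measure (OG (2 * n))) (s : Fin n → ℂ)
    (X : Matrix (Fin (2 * n)) (Fin (2 * n)) ℝ) : ℂ :=
  ∫ k : OG (2 * n), ∏ j : Fin n,
    cpw ((((k : Matrix (Fin (2 * n)) (Fin (2 * n)) ℝ) * X *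
        (k : Matrix (Fin (2 * n)) (Fin (2 * n)) ℝ)ᵀ).submatrix
          (Fin.castLE (by have := j.isLt; omega : 2 * (j.val + 1) ≤ 2 * n))
          (Fin.castLE (by have := j.isLt; omega : 2 * (j.val + 1) ≤ 2 * n))).det)
      (expo n s j) ∂μ



lemma cpw_mul (a b : ℝ) (w : ℂ) : cpw (a * b) w = cpw a w * cpw b w := by
  unfold cpw
  by_cases ha : a = 0
  · simp [ha]
  by_cases hb : b = 0
  · simp [hb]
  rw [if_neg (mul_ne_zero ha hb), if_neg ha, if_neg hb, ← Complex.exp_add, Real.log_mul ha hb]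
  push_cast
  ring_nf

lemma cpw_one (w : ℂ) : cpw 1 w = 1 := by simp [cpw]

lemma measurable_cpw (w : ℂ) : Measurable fun t : ℝ => cpw t w := by
  unfold cpw
  refine Measurable.ite (measurableSet_singleton 0) measurable_const ?_
  fun_prop

lemma norm_cpw_le {t B : ℝ} {w : ℂ} (hw : 0 ≤ w.re) (hB : |t| ≤ B) :
    ‖cpw t w‖ ≤ Real.exp (w.re * Real.log B) := by
  unfold cpw
  split_ifs with h
  · simp [Real.exp_nonneg]
  · rw [Complex.norm_exp]
    have : (w * (Real.log t : ℂ)).re = w.re * Real.log |t| := by simp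
    rw [this]
    gcongr

/-- The integrand. -/
def PhiF (n : ℕ) (s : Fin n → ℂ) (Y : Matrix (Fin (2 * n)) (Fin (2 * n)) ℝ) : ℂ :=
  ∏ j : Fin n,
    cpw ((Y.submatrix
          (Fin.castLE (by have := j.isLt; omega : 2 * (j.val + 1) ≤ 2 * n))
          (Fin.castLE (by have := j.isLt; omega : 2 * (j.val + 1) ≤ 2 * n))).det)
      (expo n s j)

lemma submatrix_lower_mul {m N : ℕ} (h : m ≤ N) (T A : Matrix (Fin N) (Fin N) ℝ)
    (hT : ∀ i j, i < j → T i j = 0) :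
    (T * A).submatrix (Fin.castLE h) (Fin.castLE h) =
      T.submatrix (Fin.castLE h) (Fin.castLE h) * A.submatrix (Fin.castLE h) (Fin.castLE h) := by
  ext i j
  simp only [submatrix_apply, mul_apply]
  symm
  refine Finset.sum_of_injOn (Fin.castLE h) (Fin.castLE_injective h).injOn (by simp) ?_ (by simp)
  intro a _ ha
  rw [hT _ _, zero_mul]
  rw [Fin.lt_def]
  by_contra hlt
  apply ha
  refine ⟨⟨a, ?_⟩, by simp, by ext; simp⟩
  have := i.isLt
  simp at hlt
  omega

lemma det_lower_conj {m N : ℕ} (h : m ≤ N) (T A : Matrix (Fin N) (Fin N) ℝ)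
    (hT : ∀ i j, i < j → T i j = 0) :
    ((T * A * Tᵀ).submatrix (Fin.castLE h) (Fin.castLE h)).det =
      (T.submatrix (Fin.castLE h) (Fin.castLE h)).det ^ 2 *
        (A.submatrix (Fin.castLE h) (Fin.castLE h)).det := by
  have h2 : ((A * Tᵀ).submatrix (Fin.castLE h) (Fin.castLE h)).det =
      (T.submatrix (Fin.castLE h) (Fin.castLE h)).det *
        (A.submatrix (Fin.castLE h) (Fin.castLE h)).det := by
    rw [← det_transpose, transpose_submatrix, transpose_mul, transpose_transpose,
      submatrix_lower_mul h _ _ hT, det_mul, ← transpose_submatrix, det_transpose]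
  rw [Matrix.mul_assoc, submatrix_lower_mul h _ _ hT, det_mul, h2]
  ring

lemma PhiF_lower (n : ℕ) (s : Fin n → ℂ) (T : Matrix (Fin (2 * n)) (Fin (2 * n)) ℝ)
    (hT : ∀ i j, i < j → T i j = 0) :
    ∃ c : ℂ, ∀ A, PhiF n s (T * A * Tᵀ) = c * PhiF n s A := by
  refine ⟨∏ j : Fin n, cpw ((T.submatrix
          (Fin.castLE (by have := j.isLt; omega : 2 * (j.val + 1) ≤ 2 * n))
          (Fin.castLE (by have := j.isLt; omega : 2 * (j.val + 1) ≤ 2 * n))).det ^ 2)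
      (expo n s j), fun A => ?_⟩
  unfold PhiF
  rw [← Finset.prod_mul_distrib]
  refine Finset.prod_congr rfl fun j _ => ?_
  rw [det_lower_conj _ _ _ hT, cpw_mul]

lemma PhiF_one (n : ℕ) (s : Fin n → ℂ) : PhiF n s 1 = 1 := by
  unfold PhiF
  refine Finset.prod_eq_one fun j _ => ?_
  rw [submatrix_one _ (Fin.castLE_injective _), det_one, cpw_one]

lemma exists_lower {N : ℕ} (M : Matrix (Fin N) (Fin N) ℝ) (hM : IsUnit M) :
    ∃ T : Matrix (Fin N) (Fin N) ℝ, (∀ i j, i < j → T i j = 0) ∧ (T * M) * (T * M)ᵀ = 1 := by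
  have hS : (M * Mᴴ).PosDef :=
    Matrix.PosDef.mul_conjTranspose_self M (vecMul_injective_of_isUnit hM)
  have hD : (LDL.diag hS).PosDef := by
    rw [LDL.diag_eq_lowerInv_conj]
    exact hS.mul_mul_conjTranspose_same
      (vecMul_injective_of_isUnit (isUnit_of_invertible (LDL.lowerInv hS)))
  have hd : ∀ i, 0 < LDL.diagEntries hS i := by
    intro i
    exact (posDef_diagonal_iff.mp hD) i
  refine ⟨diagonal (fun i => (Real.sqrt (LDL.diagEntries hS i))⁻¹) * LDL.lowerInv hS, ?_, ?_⟩
  · intro i j hij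
    rw [diagonal_mul, LDL.lowerInv_triangular hS hij, mul_zero]
  · have h := LDL.diag_eq_lowerInv_conj hS
    have h : LDL.diag hS = LDL.lowerInv hS * (M * Mᵀ) * (LDL.lowerInv hS)ᵀ := h
    have : ∀ D L : Matrix (Fin N) (Fin N) ℝ, (D * L * M) * (D * L * M)ᵀ =
        D * (L * (M * Mᵀ) * Lᵀ) * Dᵀ := by
      intro D L
      simp only [transpose_mul, Matrix.mul_assoc]
    rw [this, ← h, LDL.diag, diagonal_transpose, diagonal_mul_diagonal, diagonal_mul_diagonal,
      ← diagonal_one]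
    congr 1
    ext i
    have h1 := Real.sqrt_pos.mpr (hd i)
    have h2 := Real.mul_self_sqrt (hd i).le
    field_simp
    nlinarith

lemma PhiF_factor (n : ℕ) (s : Fin n → ℂ) (M : Matrix (Fin (2 * n)) (Fin (2 * n)) ℝ)
    (hM : IsUnit M) : ∃ q : OG (2 * n), ∀ A,
      PhiF n s (M * A * Mᵀ) = PhiF n s (M * Mᵀ) *
        PhiF n s ((q : Matrix (Fin (2 * n)) (Fin (2 * n)) ℝ) * A *
          (q : Matrix (Fin (2 * n)) (Fin (2 * n)) ℝ)ᵀ) := by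
  obtain ⟨T, hT, hq⟩ := exists_lower M hM
  obtain ⟨c, hc⟩ := PhiF_lower n s T hT
  refine ⟨⟨T * M, (Matrix.mem_orthogonalGroup_iff (Fin (2 * n)) ℝ).mpr hq⟩, fun A => ?_⟩
  have h1 : PhiF n s (T * (M * Mᵀ) * Tᵀ) = 1 := by
    rw [← PhiF_one n s, ← hq]
    simp only [transpose_mul, Matrix.mul_assoc]
  have h2 : T * M * A * (T * M)ᵀ = T * (M * A * Mᵀ) * Tᵀ := by
    simp only [transpose_mul, Matrix.mul_assoc]
  rw [hc] at h1
  simp only [h2, hc]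
  linear_combination (-PhiF n s (M * A * Mᵀ)) * h1

instance matrixBorel {l : Type*} [Fintype l] : BorelSpace (Matrix l l ℝ) :=
  inferInstanceAs (BorelSpace (l → l → ℝ))

instance matrixSC {l : Type*} [Fintype l] : SecondCountableTopology (Matrix l l ℝ) :=
  inferInstanceAs (SecondCountableTopology (l → l → ℝ))

instance borelOG (N : ℕ) : BorelSpace (OG N) :=
  Subtype.borelSpace (OG N : Set (Matrix (Fin N) (Fin N) ℝ))

instance scOG (N : ℕ) : SecondCountableTopology (OG N) :=
  TopologicalSpace.Subtype.secondCountableTopology (OG N : Set (Matrix (Fin N) (Fin N) ℝ))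

instance compactOG (N : ℕ) : CompactSpace (OG N) := by
  refine isCompact_iff_compactSpace (s := (OG N : Set (Matrix (Fin N) (Fin N) ℝ))).mp ?_
  have hK : IsCompact (Set.univ.pi fun _ : Fin N => Set.univ.pi fun _ : Fin N =>
      Set.Icc (-1 : ℝ) 1) :=
    isCompact_univ_pi fun _ => isCompact_univ_pi fun _ => isCompact_Icc
  refine IsCompact.of_isClosed_subset (X := Matrix (Fin N) (Fin N) ℝ) hK ?_ ?_
  · have : ((Matrix.orthogonalGroup (Fin N) ℝ : Set (Matrix (Fin N) (Fin N) ℝ))) =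
        {A | A * Aᵀ = 1} := by
      ext A
      exact Matrix.mem_orthogonalGroup_iff (Fin N) ℝ
    rw [this]
    exact isClosed_eq (by fun_prop) continuous_const
  · intro A hA i _ j _
    have := entry_norm_bound_of_unitary (𝕜 := ℝ) hA i j
    rw [Real.norm_eq_abs] at this
    exact abs_le.mp this

lemma cont_det (n : ℕ) (g X : Matrix (Fin (2 * n)) (Fin (2 * n)) ℝ) {m : ℕ} (h : m ≤ 2 * n) :
    Continuous fun p : OG (2 * n) × OG (2 * n) =>
      (((p.2 : Matrix (Fin (2 * n)) (Fin (2 * n)) ℝ) * (g * p.1 * X *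
        (p.1 : Matrix (Fin (2 * n)) (Fin (2 * n)) ℝ)ᵀ * gᵀ) *
        (p.2 : Matrix (Fin (2 * n)) (Fin (2 * n)) ℝ)ᵀ).submatrix
          (Fin.castLE h) (Fin.castLE h)).det := by
  fun_prop

lemma det_sq_orth {N : ℕ} (k : OG N) : (k : Matrix (Fin N) (Fin N) ℝ).det ^ 2 = 1 := by
  have := congrArg det (((Matrix.mem_orthogonalGroup_iff (Fin N) ℝ).mp k.2))
  rw [det_mul, det_transpose,
    det_one] at this
  rw [sq]; exact this

lemma PhiF_integrable (n : ℕ) (μ : Measure (OG (2 * n))) [IsProbabilityMeasure μ]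
    (g X : Matrix (Fin (2 * n)) (Fin (2 * n)) ℝ) (s : Fin n → ℂ)
    (hre : ∀ j : Fin n, ∀ h : j.val + 1 < n, 2 ≤ (s j - s ⟨j.val + 1, h⟩).re) :
    Integrable (fun p : OG (2 * n) × OG (2 * n) =>
      PhiF n s ((p.2 : Matrix (Fin (2 * n)) (Fin (2 * n)) ℝ) * (g * p.1 * X *
        (p.1 : Matrix (Fin (2 * n)) (Fin (2 * n)) ℝ)ᵀ * gᵀ) *
        (p.2 : Matrix (Fin (2 * n)) (Fin (2 * n)) ℝ)ᵀ)) (μ.prod μ) := by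
  have hb : ∀ j : Fin n, ∃ C : ℝ, ∀ p : OG (2 * n) × OG (2 * n),
      ‖cpw ((((p.2 : Matrix (Fin (2 * n)) (Fin (2 * n)) ℝ) * (g * p.1 * X *
        (p.1 : Matrix (Fin (2 * n)) (Fin (2 * n)) ℝ)ᵀ * gᵀ) *
        (p.2 : Matrix (Fin (2 * n)) (Fin (2 * n)) ℝ)ᵀ).submatrix
          (Fin.castLE (by have := j.isLt; omega : 2 * (j.val + 1) ≤ 2 * n))
          (Fin.castLE (by have := j.isLt; omega : 2 * (j.val + 1) ≤ 2 * n))).det)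
      (expo n s j)‖ ≤ C := by
    intro j
    by_cases hj : j.val + 1 < n
    · obtain ⟨B, hB⟩ := isCompact_univ.exists_bound_of_continuousOn
        (cont_det n g X (by have := j.isLt; omega : 2 * (j.val + 1) ≤ 2 * n)).continuousOn
      refine ⟨_, fun p => norm_cpw_le (B := B) ?_ ?_⟩
      · have := hre j hj
        simp only [expo, dif_pos hj]
        simp at this ⊢
        linarith
      · exact hB p (Set.mem_univ _)
    · refine ⟨‖cpw (g.det ^ 2 * X.det) (expo n s j)‖, fun p => le_of_eq ?_⟩
      have hjn : 2 * (j.val + 1) = 2 * n := by have := j.isLt; omega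
      have key : ∀ (m : ℕ) (h : m ≤ 2 * n) (_ : m = 2 * n)
          (A : Matrix (Fin (2 * n)) (Fin (2 * n)) ℝ),
          (A.submatrix (Fin.castLE h) (Fin.castLE h)).det = A.det := by
        intro m h hm A
        subst hm
        rfl
      rw [key _ _ hjn]
      simp only [det_mul, det_transpose]
      congr 2
      linear_combination (g.det ^ 2 * X.det * (p.1 : Matrix (Fin (2 * n)) (Fin (2 * n)) ℝ).det ^ 2)
        * det_sq_orth p.2 + g.det ^ 2 * X.det * det_sq_orth p.1
  choose C hC using hb
  refine Integrable.of_bound (C := ∏ j, C j) ?_ (ae_of_all _ fun p => ?_)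
  · apply Measurable.aestronglyMeasurable
    unfold PhiF
    refine Finset.measurable_prod _ fun j _ => ?_
    exact (measurable_cpw _).comp (cont_det n g X _).measurable
  · unfold PhiF
    rw [norm_prod]
    exact Finset.prod_le_prod (fun _ _ => norm_nonneg _) fun j _ => hC j p

/-- Lemma 2.5, Eq. (2.14): factorization
`∫_K f_n(s, g k X kᵀ gᵀ) d*k = Ψ_n(s, ggᵀ) f_n(s, X)`. -/
theorem spherical_factorization_Phi (n : ℕ) (hn : 1 ≤ n)
    (μ : Measure (OG (2 * n))) (hμ : μ.IsHaarMeasure) (hμ1 : IsProbabilityMeasure μ)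
    (g : Matrix (Fin (2 * n)) (Fin (2 * n)) ℝ) (hg : IsUnit g)
    (X : Matrix (Fin (2 * n)) (Fin (2 * n)) ℝ) (hX : Xᵀ = -X)
    (s : Fin n → ℂ)
    (hre : ∀ j : Fin n, ∀ h : j.val + 1 < n, 2 ≤ (s j - s ⟨j.val + 1, h⟩).re) :
    (∫ k : OG (2 * n),
        sphInt n μ s (g * (k : Matrix (Fin (2 * n)) (Fin (2 * n)) ℝ) * X *
          (k : Matrix (Fin (2 * n)) (Fin (2 * n)) ℝ)ᵀ * gᵀ) ∂μ) =
      sphInt n μ s (g * gᵀ) * sphInt n μ s X := by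
  have hsph : ∀ Y, sphInt n μ s Y = ∫ k : OG (2 * n),
      PhiF n s ((k : Matrix (Fin (2 * n)) (Fin (2 * n)) ℝ) * Y *
        (k : Matrix (Fin (2 * n)) (Fin (2 * n)) ℝ)ᵀ) ∂μ := fun Y => rfl
  simp only [hsph]
  rw [integral_integral_swap (PhiF_integrable n μ g X s hre), ← integral_mul_const]
  refine integral_congr_ae (ae_of_all _ fun h => ?_)
  have hh : IsUnit (h : Matrix (Fin (2 * n)) (Fin (2 * n)) ℝ) := by
    rw [isUnit_iff_isUnit_det, isUnit_iff_ne_zero]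
    intro h0
    have := det_sq_orth h
    rw [h0] at this
    norm_num at this
  obtain ⟨q, hq⟩ := PhiF_factor n s _ (hh.mul hg)
  have e1 : ∀ k : OG (2 * n), PhiF n s ((h : Matrix (Fin (2 * n)) (Fin (2 * n)) ℝ) * (g * k * X *
        (k : Matrix (Fin (2 * n)) (Fin (2 * n)) ℝ)ᵀ * gᵀ) *
        (h : Matrix (Fin (2 * n)) (Fin (2 * n)) ℝ)ᵀ) =
      PhiF n s ((h : Matrix (Fin (2 * n)) (Fin (2 * n)) ℝ) * (g * gᵀ) *
        (h : Matrix (Fin (2 * n)) (Fin (2 * n)) ℝ)ᵀ) *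
      PhiF n s (((q * k : OG (2 * n)) : Matrix (Fin (2 * n)) (Fin (2 * n)) ℝ) * X *
        ((q * k : OG (2 * n)) : Matrix (Fin (2 * n)) (Fin (2 * n)) ℝ)ᵀ) := by
    intro k
    have := hq ((k : Matrix (Fin (2 * n)) (Fin (2 * n)) ℝ) * X *
      (k : Matrix (Fin (2 * n)) (Fin (2 * n)) ℝ)ᵀ)
    simp only [transpose_mul, Matrix.mul_assoc, Submonoid.coe_mul] at this ⊢
    exact this
  simp only [e1]
  rw [integral_const_mul]
  congr 1
  exact integral_mul_left_eq_self (fun k : OG (2 * n) =>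
    PhiF n s ((k : Matrix (Fin (2 * n)) (Fin (2 * n)) ℝ) * X *
        (k : Matrix (Fin (2 * n)) (Fin (2 * n)) ℝ)ᵀ)) q

end
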